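/- The equation (x - y)^4 + x^4 + (x + y)^4 = z^5 has no integer solutions x, y, z with gcd(x, y) = 1. -/

import Mathlib

theorem rat_euclid6 (r s : ℚ) : ∃ x y : ℤ, |(r - x) ^ 2 - 6 * (s - y) ^ 2| < 1 := by
  have hs := abs_le.1 (abs_sub_round s)
  have hr := abs_le.1 (abs_sub_round r)
  obtain ⟨g, hg⟩ : ∃ g, g = s - round s := ⟨_, rfl⟩
  obtain ⟨f, hf⟩ : ∃ f, f = r - round r := ⟨_, rfl⟩
  rw [← hg] at hs
  rw [← hf] at hr
  have hirr : 24 * g ^ 2 ≠ 5 := by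
    intro h
    have h30 : ¬ IsSquare (30 : ℚ) := by norm_num
    exact h30 ⟨12 * g, by linarith [h, show 12 * g * (12 * g) = 6 * (24 * g ^ 2) by ring]⟩
  have key : ∃ k : ℤ, |(f - k) ^ 2 - 6 * g ^ 2| < 1 := by
    have hg2 : g ^ 2 ≤ 1 / 4 := by nlinarith
    have hf2 : f ^ 2 ≤ 1 / 4 := by nlinarith
    by_cases hw : 6 * g ^ 2 < 1
    · exact ⟨0, by rw [abs_lt]; constructor <;> push_cast <;> nlinarith [sq_nonneg g, sq_nonneg f]⟩
    push Not at hw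
    rcases le_total 0 f with h0 | h0
    · by_cases h1 : (1 - f) ^ 2 > 6 * g ^ 2 - 1
      · exact ⟨1, by rw [abs_lt]; constructor <;> push_cast <;> nlinarith⟩
      · push Not at h1
        refine ⟨-1, ?_⟩
        rw [abs_lt]; push_cast
        refine ⟨by nlinarith, ?_⟩
        by_contra hc
        push Not at hc
        have : f = 1 / 2 := by nlinarith
        subst this
        apply hirr
        nlinarith
    · by_cases h1 : (1 + f) ^ 2 > 6 * g ^ 2 - 1
      · exact ⟨-1, by rw [abs_lt]; constructor <;> push_cast <;> nlinarith⟩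
      · push Not at h1
        refine ⟨1, ?_⟩
        rw [abs_lt]; push_cast
        refine ⟨by nlinarith, ?_⟩
        by_contra hc
        push Not at hc
        have : f = - (1 / 2) := by nlinarith
        subst this
        apply hirr
        nlinarith
  obtain ⟨k, hk⟩ := key
  refine ⟨round r + k, round s, ?_⟩
  rw [hf, hg] at hk
  push_cast
  rwa [sub_sub] at hk

theorem nonsq6 : ∀ n : ℤ, (6 : ℤ) ≠ n * n := by
  intro n h
  have : ¬ IsSquare (6 : ℤ) := by norm_num
  exact this ⟨n, h⟩

theorem norm6 (a : ℤ√6) : a.norm = a.re * a.re - 6 * a.im * a.im := rfl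

theorem norm6_ne {a : ℤ√6} (h : a ≠ 0) : a.norm ≠ 0 :=
  fun h' => h ((Zsqrtd.norm_eq_zero nonsq6 a).1 h')

theorem mul6_ne {a b : ℤ√6} (ha : a ≠ 0) (hb : b ≠ 0) : a * b ≠ 0 := by
  intro h
  have := congrArg Zsqrtd.norm h
  rw [Zsqrtd.norm_mul, Zsqrtd.norm_zero] at this
  exact mul_ne_zero (norm6_ne ha) (norm6_ne hb) this

theorem euclid6 (a b : ℤ√6) (hb : b ≠ 0) : ∃ q, |(a - q * b).norm| < |b.norm| := by
  have hN := norm6_ne hb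
  obtain ⟨x, y, hxy⟩ := rat_euclid6 ((a * star b).re / b.norm) ((a * star b).im / b.norm)
  refine ⟨⟨x, y⟩, ?_⟩
  have h1 : ((a - ⟨x, y⟩ * b).norm : ℤ) * b.norm =
      ((a * star b).re - x * b.norm) ^ 2 - 6 * ((a * star b).im - y * b.norm) ^ 2 := by
    simp only [norm6, Zsqrtd.re_sub, Zsqrtd.im_sub, Zsqrtd.re_mul, Zsqrtd.im_mul, Zsqrtd.re_star,
      Zsqrtd.im_star]
    ring
  have hNq : (b.norm : ℚ) ≠ 0 := by exact_mod_cast hN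
  have h2 : (((a - ⟨x, y⟩ * b).norm : ℤ) : ℚ) = b.norm *
     (((a * star b).re / b.norm - x) ^ 2 - 6 * ((a * star b).im / b.norm - y) ^ 2) := by
    have h1' := congrArg (fun k : ℤ => (k : ℚ)) h1
    push_cast at h1'
    field_simp
    linear_combination h1'
  have h3 : |(((a - ⟨x, y⟩ * b).norm : ℤ) : ℚ)| < |(b.norm : ℚ)| := by
    rw [h2, abs_mul]
    exact mul_lt_of_lt_one_right (abs_pos.2 hNq) hxy
  exact_mod_cast h3

theorem bezout6 (k : ℕ) : ∀ U Q : ℤ√6, Q.norm.natAbs ≤ k → ¬ (U = 0 ∧ Q = 0) →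
    ∃ g c d a b : ℤ√6, g ≠ 0 ∧ U = g * c ∧ Q = g * d ∧ a * c + b * d = 1 := by
  induction k with
  | zero =>
    intro U Q hk h
    have hQ : Q = 0 := by
      by_contra hQ
      have := norm6_ne hQ
      omega
    subst hQ
    exact ⟨U, 1, 0, 1, 0, fun h' => h ⟨h', rfl⟩, by ring, by ring, by ring⟩
  | succ k ih =>
    intro U Q hk h
    by_cases hQ : Q = 0
    · subst hQ
      exact ⟨U, 1, 0, 1, 0, fun h' => h ⟨h', rfl⟩, by ring, by ring, by ring⟩
    · obtain ⟨q, hq⟩ := euclid6 U Q hQ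
      obtain ⟨g, c, d, a, b, hg, h1, h2, h3⟩ := ih Q (U - q * Q)
        (by rw [Int.abs_eq_natAbs, Int.abs_eq_natAbs] at hq; omega) (fun h' => hQ h'.1)
      exact ⟨g, q * c + d, c, b, a - b * q, hg, by linear_combination h2 + q * h1, h1,
        by linear_combination h3⟩

def del6 : ℤ√6 := ⟨6, -1⟩

theorem pd6_re (P Q : ℤ√6) : (P * P + del6 * (Q * Q)).re =
    P.re ^ 2 + 6 * P.im ^ 2 + 6 * (Q.re - Q.im) ^ 2 + 30 * Q.im ^ 2 := by
  simp only [del6, Zsqrtd.re_add, Zsqrtd.re_mul, Zsqrtd.im_mul]; ring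

theorem pd6_norm (P Q : ℤ√6) : (P * P + del6 * (Q * Q)).norm =
    P.norm ^ 2 + 30 * Q.norm ^ 2 + 12 * ((P * star Q).re + (P * star Q).im) ^ 2
      + 60 * (P * star Q).im ^ 2 := by
  simp only [norm6, del6, Zsqrtd.re_add, Zsqrtd.im_add, Zsqrtd.re_mul, Zsqrtd.im_mul,
    Zsqrtd.re_star, Zsqrtd.im_star]; ring

theorem pd6_norm_pos (P Q : ℤ√6) (h : ¬ (P = 0 ∧ Q = 0)) : 0 < (P * P + del6 * (Q * Q)).norm := by
  rw [pd6_norm]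
  by_cases hQ : Q = 0
  · have hP : P ≠ 0 := fun h' => h ⟨h', hQ⟩
    have := norm6_ne hP
    positivity
  · have := norm6_ne hQ
    positivity

theorem pd6_re_pos (P Q : ℤ√6) (h : ¬ (P = 0 ∧ Q = 0)) : 0 < (P * P + del6 * (Q * Q)).re := by
  have h1 := pd6_norm_pos P Q h
  have h2 : 0 ≤ (P * P + del6 * (Q * Q)).re := by rw [pd6_re]; positivity
  rw [norm6] at h1
  rcases h2.lt_or_eq with h3 | h3
  · exact h3
  · rw [← h3] at h1
    nlinarith [sq_nonneg (P * P + del6 * (Q * Q)).im]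
def cand6 : List (ℤ × ℤ × ℤ × ℤ) :=
  [(1, 0, -1, 0), (0, 0, -1, -1), (0, 1, -1, 0), (0, 0, -1, 0), (-2, 2, -2, -1), (0, 1, -2, -1), (-1, -1, -2, 1), (2, -2, -2, 1), (-1, 1, -3, -1), (-2, -3, -2, 1), (1, 3, -2, -1), (3, 4, -2, -1), (-4, -4, -2, 1), (0, 1, -5, 2), (1, 5, -2, -1), (-2, -5, -2, 1), (-5, 4, -2, -1), (5, -4, -2, 1), (6, 1, -1, 0), (6, 1, -5, -2), (16, 11, -1, -1), (-52, 23, -1, -1)]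

def good6 (a b : ℤ) : Bool :=
  (a == 1 && b == 0) || (a == 5 && b == 2) || (a == 5 && b == -2) ||
    (a == 3 && b == 1) || (a == 3 && b == -1)

def ok6 (a b i j : ℤ) : Bool :=
  !((((i * i + 6 * j * j + 6) * a - 6 * (2 * i * j - 1) * b) % (a * a - 6 * b * b) == 0) &&
    (((2 * i * j - 1) * a - (i * i + 6 * j * j + 6) * b) % (a * a - 6 * b * b) == 0)) ||
  good6 a b ||
  cand6.any (fun (x, x', w, w') =>
    let m := ((i * i + 6 * j * j + 6) * a - 6 * (2 * i * j - 1) * b) / (a * a - 6 * b * b)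
    let m' := ((2 * i * j - 1) * a - (i * i + 6 * j * j + 6) * b) / (a * a - 6 * b * b)
    let X := x * x + 6 * x' * x'
    let X' := 2 * x * x'
    let Y := 2 * (x * w + 6 * x' * w')
    let Y' := 2 * (x * w' + x' * w)
    let W := w * w + 6 * w' * w'
    let W' := 2 * w * w'
    let v := a * X + 6 * b * X' + (i * Y + 6 * j * Y') + (m * W + 6 * m' * W')
    let v' := a * X' + b * X + (i * Y' + j * Y) + (m * W' + m' * W)
    decide (!(w == 0 && w' == 0) && decide (v * v - 6 * v' * v' < a * a - 6 * b * b)))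

def check6 : Bool :=
  (List.range 51).all fun a => (List.range 41).all fun b' =>
    let b : ℤ := (b' : ℤ) - 20
    let N := (a : ℤ) * a - 6 * b * b
    !(decide (5 * b ≤ 2 * a) && decide (-5 * b ≤ 2 * a) && decide (0 < N) && decide (N ≤ 100)) ||
    let g := Int.gcd a b
    (List.range (N.toNat / g)).all fun i => (List.range g).all fun j => ok6 a b i j

theorem check6_true : check6 = true := by decide +kernel
open MeasureTheory in
theorem mink4 (z t1 t2 : ℝ) (hz : 0 < z) :
    ∃ u1 u2 q1 q2 : ℤ, ¬ (u1 = 0 ∧ u2 = 0 ∧ q1 = 0 ∧ q2 = 0) ∧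
      (z * u1 + t1 * q1 + 6 * t2 * q2) ^ 2 + 6 * (z * u2 + t2 * q1 + t1 * q2) ^ 2
        + 6 * ((q1 : ℝ) - q2) ^ 2 + 30 * (q2 : ℝ) ^ 2 < 11 * z := by
  set c : ℝ := (√(11 * z))⁻¹ with hc
  have hcpos : 0 < c := by positivity
  have hc2 : c ^ 2 = (11 * z)⁻¹ := by
    rw [hc, inv_pow, Real.sq_sqrt (by positivity)]
  set A : Matrix (Fin 4) (Fin 4) ℝ :=
    !![c * z, 0, c * t1, c * (6 * t2);
       0, c * (√6 * z), c * (√6 * t2), c * (√6 * t1);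
       0, 0, c * √6, - (c * √6);
       0, 0, 0, c * √30] with hA
  have hdet : A.det = 6 * √30 / 121 := by
    have h6 : √6 ^ 2 = 6 := Real.sq_sqrt (by norm_num)
    have : A.det = (c * z) * (c * (√6 * z)) * (c * √6) * (c * √30) := by
      rw [Matrix.det_of_isUpperTriangular]
      · simp [Fin.prod_univ_four, hA]
      · intro i j hij
        fin_cases i <;> fin_cases j <;> simp_all
    rw [this]
    have e : (c * z) * (c * (√6 * z)) * (c * √6) * (c * √30)
      = (c ^ 2) ^ 2 * z ^ 2 * √6 ^ 2 * √30 := by ring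
    rw [e, h6, hc2]
    field_simp
    norm_num
  set S : Set (Fin 4 → ℝ) := {x | ∑ i, |x i| ^ (2 : ℝ) < 1} with hS
  have hS2 : S = {x : Fin 4 → ℝ | ∑ i, (x i) ^ 2 < 1} := by
    simp [hS]
  have hvol : volume S = ENNReal.ofReal (Real.pi ^ 2 / 2) := by
    rw [hS, MeasureTheory.volume_sum_rpow_lt_one (Fin 4) (by norm_num)]
    congr 1
    have h1 : Real.Gamma (1 / 2 + 1) = √Real.pi / 2 := by
      rw [Real.Gamma_add_one (by norm_num), Real.Gamma_one_half_eq]; ring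
    have h2 : Real.Gamma ((Fintype.card (Fin 4) : ℝ) / 2 + 1) = 2 := by
      have : ((Fintype.card (Fin 4) : ℝ) / 2 + 1) = ((2 : ℕ) : ℝ) + 1 := by norm_num
      rw [this, Real.Gamma_nat_eq_factorial]; norm_num
    rw [h1, h2]
    have : (2 * (√Real.pi / 2)) ^ Fintype.card (Fin 4) = (√Real.pi ^ 2) ^ 2 := by
      simp; ring
    rw [this, Real.sq_sqrt Real.pi_pos.le]
  set M := Matrix.toLin' A with hM
  have hMdet : LinearMap.det M = 6 * √30 / 121 := by
    rw [hM, LinearMap.det_toLin', hdet]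
  have hne : LinearMap.det M ≠ 0 := by
    rw [hMdet]; positivity
  have hvol2 : volume (M ⁻¹' S) = ENNReal.ofReal ((6 * √30 / 121)⁻¹ * (Real.pi ^ 2 / 2)) := by
    rw [Measure.addHaar_preimage_linearMap _ hne, hMdet, hvol,
      ENNReal.ofReal_mul (by positivity), abs_of_pos (by positivity)]
  have hconv : Convex ℝ (M ⁻¹' S) := by
    apply Convex.linear_preimage
    rw [hS2]
    have : ConvexOn ℝ Set.univ (fun x : Fin 4 → ℝ => ∑ i, (x i) ^ 2) := by
      have hi : ∀ i : Fin 4, ConvexOn ℝ Set.univ (fun x : Fin 4 → ℝ => (x i) ^ 2) := by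
        intro i
        have h := (even_two.convexOn_pow (𝕜 := ℝ)).comp_linearMap
          (LinearMap.proj i : (Fin 4 → ℝ) →ₗ[ℝ] ℝ)
        exact h
      have := ((hi 0).add (hi 1)).add ((hi 2).add (hi 3))
      have e : (fun x : Fin 4 → ℝ => ∑ i, (x i) ^ 2) =
          ((fun x => x 0 ^ 2) + fun x => x 1 ^ 2) + ((fun x => x 2 ^ 2) + fun x => x 3 ^ 2) := by
        funext x; simp only [Fin.sum_univ_four, Pi.add_apply]; ring
      rw [e]; exact this
    simpa using this.convex_lt 1
  have hsymm : ∀ x ∈ M ⁻¹' S, -x ∈ M ⁻¹' S := by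
    intro x hx
    simp only [Set.mem_preimage, map_neg] at hx ⊢
    rw [hS2] at hx ⊢
    simpa using hx
  have fund := ZSpan.isAddFundamentalDomain' (Pi.basisFun ℝ (Fin 4)) (volume : Measure (Fin 4 → ℝ))
  have hF : volume (ZSpan.fundamentalDomain (Pi.basisFun ℝ (Fin 4))) = 1 := by
    rw [ZSpan.fundamentalDomain_pi_basisFun]
    simp [Real.volume_pi_Ico_toReal, volume_pi_pi]
  have : Countable (Submodule.span ℤ (Set.range (Pi.basisFun ℝ (Fin 4)))).toAddSubgroup := by
    have : Countable (Submodule.span ℤ (Set.range (Pi.basisFun ℝ (Fin 4)))) := inferInstance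
    exact this
  obtain ⟨x, hx0, hx⟩ := exists_ne_zero_mem_lattice_of_measure_mul_two_pow_lt_measure fund hsymm hconv (by
    rw [hF, hvol2]
    simp only [one_mul, Module.finrank_fintype_fun_eq_card, Fintype.card_fin]
    rw [show (2 : ENNReal) ^ 4 = ENNReal.ofReal 16 by norm_num]
    rw [ENNReal.ofReal_lt_ofReal_iff (by positivity)]
    have h30 : √30 < 5.5 := by
      rw [Real.sqrt_lt' (by norm_num)]; norm_num
    have h30' : 0 < √30 := by positivity
    have hpi := Real.pi_gt_d2
    rw [inv_mul_eq_div, lt_div_iff₀ (by positivity)]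
    nlinarith)
  obtain ⟨x, hxL⟩ := x
  have hmem : ∀ i, ∃ k : ℤ, (k : ℝ) = x i := by
    have := (Pi.basisFun ℝ (Fin 4)).mem_span_iff_repr_mem ℤ x
    intro i
    have h2 := this.1 hxL i
    simpa using h2
  choose k hk using hmem
  refine ⟨k 0, k 1, k 2, k 3, ?_, ?_⟩
  · rintro ⟨h0, h1, h2, h3⟩
    apply hx0
    ext i
    show x i = 0
    rw [← hk i]
    fin_cases i <;> simp [h0, h1, h2, h3]
  · rw [hk, hk, hk, hk]
    have h6 : √6 ^ 2 = 6 := Real.sq_sqrt (by norm_num)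
    have h30 : √30 ^ 2 = 30 := Real.sq_sqrt (by norm_num)
    have hx' : M x ∈ S := hx
    rw [hS2] at hx'
    simp only [Set.mem_ofPred_eq, hM, Matrix.toLin'_apply, hA, Fin.sum_univ_four] at hx'
    simp [Matrix.mulVec, dotProduct, Fin.sum_univ_four] at hx'
    have e : (z * x 0 + t1 * x 2 + 6 * t2 * x 3) ^ 2 + 6 * (z * x 1 + t2 * x 2 + t1 * x 3) ^ 2
        + 6 * (x 2 - x 3) ^ 2 + 30 * (x 3) ^ 2 =
        (11 * z) * ((c * z * x 0 + c * t1 * x 2 + c * (6 * t2) * x 3) ^ 2 +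
         (c * (√6 * z) * x 1 + c * (√6 * t2) * x 2 + c * (√6 * t1) * x 3) ^ 2 +
        (c * √6 * x 2 + -(c * √6 * x 3)) ^ 2 + (c * √30 * x 3) ^ 2) := by
      have : (11 * z) * c ^ 2 = 1 := by rw [hc2]; field_simp
      have e2 : (11 * z) * ((c * z * x 0 + c * t1 * x 2 + c * (6 * t2) * x 3) ^ 2 +
         (c * (√6 * z) * x 1 + c * (√6 * t2) * x 2 + c * (√6 * t1) * x 3) ^ 2 +
        (c * √6 * x 2 + -(c * √6 * x 3)) ^ 2 + (c * √30 * x 3) ^ 2)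
         = (11 * z * c ^ 2) * ((z * x 0 + t1 * x 2 + 6 * t2 * x 3) ^ 2 + √6 ^ 2 * (z * x 1 + t2 * x 2 + t1 * x 3) ^ 2
        + √6 ^ 2 * (x 2 - x 3) ^ 2 + √30 ^ 2 * (x 3) ^ 2) := by ring
      rw [e2, this, h6, h30]; ring
    rw [e]
    have hz11 : 0 < 11 * z := by positivity
    have := mul_lt_mul_of_pos_left hx' hz11
    linarith


theorem check6_spec (a b i j : ℤ) (ha : 0 ≤ a) (ha' : a ≤ 50) (hb : 5 * b ≤ 2 * a)
    (hb' : -5 * b ≤ 2 * a) (hN : 0 < a * a - 6 * b * b) (hN' : a * a - 6 * b * b ≤ 100)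
    (hi : 0 ≤ i) (hi' : i.toNat < (a * a - 6 * b * b).toNat / Int.gcd a b)
    (hj : 0 ≤ j) (hj' : j.toNat < Int.gcd a b) : ok6 a b i j = true := by
  have h := check6_true
  simp only [check6, List.all_eq_true, List.mem_range] at h
  have h1 := h a.toNat (by omega) (b + 20).toNat (by omega)
  have e1 : ((a.toNat : ℕ) : ℤ) = a := Int.toNat_of_nonneg ha
  have e2 : (((b + 20).toNat : ℕ) : ℤ) - 20 = b := by omega
  rw [e1, e2] at h1
  simp only [Bool.or_eq_true, Bool.not_eq_true', Bool.and_eq_false_iff, decide_eq_false_iff_not,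
    List.all_eq_true, List.mem_range] at h1
  rcases h1 with h1 | h1
  · rcases h1 with ((h1 | h1) | h1) | h1
    · exact absurd hb h1
    · exact absurd hb' h1
    · exact absurd hN h1
    · exact absurd hN' h1
  · have := h1 i.toNat hi' j.toNat hj'
    rwa [Int.toNat_of_nonneg hi, Int.toNat_of_nonneg hj] at this

theorem residue6 (n τ : ℤ√6) (hN : 0 < n.norm) : ∃ s : ℤ√6, 
    0 ≤ (τ - n * s).re ∧ (τ - n * s).re.toNat < n.norm.toNat / Int.gcd n.re n.im ∧
    0 ≤ (τ - n * s).im ∧ (τ - n * s).im.toNat < Int.gcd n.re n.im := by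
  obtain ⟨a, b⟩ := n
  obtain ⟨c, d⟩ := τ
  rw [norm6] at hN
  simp only at hN ⊢
  have hgpos : 0 < Int.gcd a b := by
    rw [Nat.pos_iff_ne_zero]
    intro h
    rw [Int.gcd_eq_zero_iff] at h
    rw [h.1, h.2] at hN
    simp at hN
  have hbez := Int.gcd_eq_gcd_ab a b
  obtain ⟨a', ha⟩ : ((Int.gcd a b : ℕ) : ℤ) ∣ a := Int.gcd_dvd_left ..
  obtain ⟨b', hb⟩ : ((Int.gcd a b : ℕ) : ℤ) ∣ b := Int.gcd_dvd_right ..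
  set A := Int.gcdA a b
  set B := Int.gcdB a b
  obtain ⟨g, hg⟩ : ∃ g, g = Int.gcd a b := ⟨_, rfl⟩
  rw [← hg] at ha hb hbez hgpos ⊢
  have hgz : (0 : ℤ) < g := by exact_mod_cast hgpos
  set k := d / (g : ℤ) with hk
  obtain ⟨M, hM⟩ : ∃ M : ℤ, M = a * a' - 6 * b * b' := ⟨_, rfl⟩
  have hgM : (a * a - 6 * b * b) = g * M := by
    rw [hM]; linear_combination a * ha - 6 * b * hb
  have hMpos : 0 < M := by
    rw [hgM] at hN
    exact pos_of_mul_pos_right hN hgz.le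
  set c' := c - (a * (B * k) + 6 * b * (A * k)) with hc'
  set l := c' / M with hl
  have hab : a * b' = b * a' := by
    apply mul_left_cancel₀ hgz.ne'
    calc (g : ℤ) * (a * b') = a * (g * b') := by ring
      _ = a * b := by rw [← hb]
      _ = b * (g * a') := by rw [← ha]; ring
      _ = g * (b * a') := by ring
  have hre : ((⟨c, d⟩ : ℤ√6) - ⟨a, b⟩ * ⟨B * k + a' * l, A * k - b' * l⟩).re = c' % M := by
    simp only [Zsqrtd.re_sub, Zsqrtd.re_mul]
    rw [Int.emod_def, ← hl, hc', hM]; ring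
  have him : ((⟨c, d⟩ : ℤ√6) - ⟨a, b⟩ * ⟨B * k + a' * l, A * k - b' * l⟩).im = d % g := by
    simp only [Zsqrtd.im_sub, Zsqrtd.im_mul]
    rw [Int.emod_def, ← hk]
    linear_combination (-k) * hbez.symm + l * hab
  have hdiv : (Zsqrtd.norm (⟨a, b⟩ : ℤ√6)).toNat / g = M.toNat := by
    rw [norm6]
    simp only
    rw [hgM, Int.toNat_mul hgz.le hMpos.le, Int.toNat_natCast, Nat.mul_div_cancel_left _ hgpos]
  refine ⟨⟨B * k + a' * l, A * k - b' * l⟩, ?_⟩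
  rw [hre, him, hdiv]
  have q1 := Int.emod_nonneg c' hMpos.ne'
  have q2 := Int.emod_lt_of_pos c' hMpos
  have q3 := Int.emod_nonneg d hgz.ne'
  have q4 := Int.emod_lt_of_pos d hgz
  exact ⟨q1, by omega, q3, by omega⟩

/-- spec of the check in terms of ring elements -/
theorem ok6_spec (n τ m : ℤ√6) (hN : 0 < n.norm) (hm : n * m = τ * τ + del6)
    (h : ok6 n.re n.im τ.re τ.im = true) :
    (n = 1 ∨ n = ⟨5, 2⟩ ∨ n = ⟨5, -2⟩ ∨ n = ⟨3, 1⟩ ∨ n = ⟨3, -1⟩) ∨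
    ∃ X W : ℤ√6, W ≠ 0 ∧ (n * (X * X) + 2 * τ * (X * W) + m * (W * W)).norm < n.norm := by
  obtain ⟨a, b⟩ := n
  obtain ⟨i, j⟩ := τ
  obtain ⟨m1, m2⟩ := m
  rw [norm6] at hN
  simp only at hN h
  rw [Zsqrtd.ext_iff] at hm
  simp only [del6, Zsqrtd.re_add, Zsqrtd.im_add, Zsqrtd.re_mul, Zsqrtd.im_mul] at hm
  obtain ⟨hm1, hm2⟩ := hm
  have e1 : (i * i + 6 * j * j + 6) * a - 6 * (2 * i * j - 1) * b = m1 * (a * a - 6 * b * b) := by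
    linear_combination (-a) * hm1 + 6 * b * hm2
  have e2 : (2 * i * j - 1) * a - (i * i + 6 * j * j + 6) * b = m2 * (a * a - 6 * b * b) := by
    linear_combination (-a) * hm2 + b * hm1
  unfold ok6 at h
  rw [e1, e2, Int.mul_emod_left, Int.mul_emod_left, Int.mul_ediv_cancel _ hN.ne',
    Int.mul_ediv_cancel _ hN.ne'] at h
  simp only [beq_self_eq_true, Bool.and_self, Bool.not_true, Bool.false_or, Bool.or_eq_true] at h
  rcases h with h | h
  · left
    simp only [good6, Bool.or_eq_true, Bool.and_eq_true, beq_iff_eq] at h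
    simp only [Zsqrtd.ext_iff, Zsqrtd.re_one, Zsqrtd.im_one]
    tauto
  · right
    rw [List.any_eq_true] at h
    obtain ⟨⟨x, x', w, w'⟩, -, hx⟩ := h
    simp only [Bool.and_eq_true, decide_eq_true_eq, Bool.not_eq_true', Bool.and_eq_false_iff,
      beq_eq_false_iff_ne] at hx
    obtain ⟨hx1, hx2⟩ := hx
    refine ⟨⟨x, x'⟩, ⟨w, w'⟩, ?_, ?_⟩
    · intro h0
      rw [Zsqrtd.ext_iff] at h0
      simp only [Zsqrtd.re_zero, Zsqrtd.im_zero] at h0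
      tauto
    · rw [norm6, norm6]
      simp only [Zsqrtd.re_add, Zsqrtd.im_add, Zsqrtd.re_mul, Zsqrtd.im_mul, Zsqrtd.re_ofNat,
        Zsqrtd.im_ofNat]
      push_cast
      convert hx2 using 1
      ring


def form6 (z : ℤ) (t m U Q : ℤ√6) : ℤ√6 := z * (U * U) + 2 * t * (U * Q) + m * (Q * Q)

theorem form6_mul {z : ℤ} {t m : ℤ√6} (h : t * t + del6 = z * m) (U Q : ℤ√6) :
    (z : ℤ√6) * form6 z t m U Q = (z * U + t * Q) * (z * U + t * Q) + del6 * (Q * Q) := by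
  unfold form6
  linear_combination (-Q * Q) * h

theorem form6_pos {z : ℤ} (hz : 0 < z) {t m : ℤ√6} (h : t * t + del6 = z * m) (U Q : ℤ√6)
    (hne : ¬ (U = 0 ∧ Q = 0)) : 0 < (form6 z t m U Q).re ∧ 0 < (form6 z t m U Q).norm := by
  have hz' : (z : ℤ√6) ≠ 0 := by exact_mod_cast hz.ne'
  have hne' : ¬ (z * U + t * Q = 0 ∧ Q = 0) := by
    rintro ⟨h1, h2⟩
    rw [h2, mul_zero, add_zero] at h1
    exact hne ⟨by by_contra hU; exact mul6_ne hz' hU h1, h2⟩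
  have h1 := pd6_re_pos _ _ hne'
  have h2 := pd6_norm_pos _ _ hne'
  rw [← form6_mul h] at h1 h2
  rw [Zsqrtd.norm_mul, Zsqrtd.norm_intCast] at h2
  rw [Zsqrtd.re_smul] at h1
  exact ⟨pos_of_mul_pos_right h1 hz.le, pos_of_mul_pos_right h2 (by positivity)⟩

theorem form6_small {z : ℤ} (hz : 0 < z) {t m : ℤ√6} (h : t * t + del6 = z * m) :
    ∃ U Q : ℤ√6, ¬ (U = 0 ∧ Q = 0) ∧ (form6 z t m U Q).norm ≤ 100 := by
  obtain ⟨u1, u2, q1, q2, hne, hlt⟩ := mink4 z t.re t.im (by exact_mod_cast hz)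
  have hne' : ¬ ((⟨u1, u2⟩ : ℤ√6) = 0 ∧ (⟨q1, q2⟩ : ℤ√6) = 0) := by
    rintro ⟨h1, h2⟩
    rw [Zsqrtd.ext_iff] at h1 h2
    exact hne ⟨h1.1, h1.2, h2.1, h2.2⟩
  refine ⟨⟨u1, u2⟩, ⟨q1, q2⟩, hne', ?_⟩
  have h1 := congrArg Zsqrtd.re (form6_mul h ⟨u1, u2⟩ ⟨q1, q2⟩)
  rw [Zsqrtd.re_smul, pd6_re] at h1
  simp only [Zsqrtd.re_add, Zsqrtd.im_add, Zsqrtd.re_mul, Zsqrtd.im_mul, Zsqrtd.re_intCast,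
    Zsqrtd.im_intCast] at h1
  have hlt' : (z * u1 + t.re * q1 + 6 * t.im * q2) ^ 2 + 6 * (z * u2 + t.im * q1 + t.re * q2) ^ 2
        + 6 * (q1 - q2) ^ 2 + 30 * q2 ^ 2 < 11 * z := by exact_mod_cast hlt
  have h2 : z * (form6 z t m ⟨u1, u2⟩ ⟨q1, q2⟩).re < z * 11 := by
    rw [h1]
    calc _ = _ := by ring
      _ < _ := hlt'
      _ = _ := by ring
  have h3 := lt_of_mul_lt_mul_left h2 hz.le
  have h4 := (form6_pos hz h _ _ hne').1
  rw [norm6]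
  nlinarith [sq_nonneg (form6 z t m ⟨u1, u2⟩ ⟨q1, q2⟩).im]

theorem form6_prim {z : ℤ} (hz : 0 < z) {t m : ℤ√6} (h : t * t + del6 = z * m) (U Q : ℤ√6)
    (hne : ¬ (U = 0 ∧ Q = 0)) : ∃ c d a b : ℤ√6, a * c + b * d = 1 ∧
      (form6 z t m c d).norm ≤ (form6 z t m U Q).norm := by
  obtain ⟨g, c, d, a, b, hg, rfl, rfl, hab⟩ := bezout6 _ U Q le_rfl hne
  refine ⟨c, d, a, b, hab, ?_⟩
  have e : form6 z t m (g * c) (g * d) = g * g * form6 z t m c d := by unfold form6; ring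
  have hcd : ¬ (c = 0 ∧ d = 0) := by
    rintro ⟨rfl, rfl⟩
    simp at hab
  have hp := (form6_pos hz h c d hcd).2
  rw [e, Zsqrtd.norm_mul, Zsqrtd.norm_mul]
  have hg' := norm6_ne hg
  have : 0 < g.norm * g.norm := mul_self_pos.2 hg'
  nlinarith

theorem red6 {z : ℤ} (hz : 0 < z) {t m : ℤ√6} (h : t * t + del6 = z * m) :
    ∃ U Q n : ℤ√6, form6 z t m U Q = n ∧
      (n = 1 ∨ n = ⟨5, 2⟩ ∨ n = ⟨5, -2⟩ ∨ n = ⟨3, 1⟩ ∨ n = ⟨3, -1⟩) := by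
  classical
  obtain ⟨U0, Q0, hne0, hs0⟩ := form6_small hz h
  obtain ⟨c, d, a, b, hab, hs⟩ := form6_prim hz h U0 Q0 hne0
  have hnz : ∀ {c d a b : ℤ√6}, a * c + b * d = 1 → ¬ (c = 0 ∧ d = 0) := by
    rintro c d a b hab ⟨rfl, rfl⟩
    simp at hab
  have hex1 : ∃ k : ℕ, ∃ c d a b : ℤ√6, a * c + b * d = 1 ∧ (form6 z t m c d).norm = k :=
    ⟨(form6 z t m c d).norm.toNat, c, d, a, b, hab,
      (Int.toNat_of_nonneg (form6_pos hz h c d (hnz hab)).2.le).symm⟩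
  have hmin1 : ∀ c d a b : ℤ√6, a * c + b * d = 1 →
      ((Nat.find hex1 : ℕ) : ℤ) ≤ (form6 z t m c d).norm := by
    intro c d a b hab
    have hp := (form6_pos hz h c d (hnz hab)).2
    have := Nat.find_min' hex1 ⟨c, d, a, b, hab, (Int.toNat_of_nonneg hp.le).symm⟩
    omega
  have hspec := Nat.find_spec hex1
  set N0 := Nat.find hex1 with hN0
  have hex2 : ∃ k : ℕ, ∃ c d a b : ℤ√6, a * c + b * d = 1 ∧ (form6 z t m c d).norm = N0 ∧
      (form6 z t m c d).re = k := by
    obtain ⟨c, d, a, b, hab, hN⟩ := hspec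
    exact ⟨(form6 z t m c d).re.toNat, c, d, a, b, hab, hN,
      (Int.toNat_of_nonneg (form6_pos hz h c d (hnz hab)).1.le).symm⟩
  have hmin2 : ∀ c d a b : ℤ√6, a * c + b * d = 1 → (form6 z t m c d).norm = N0 → 
      ((Nat.find hex2 : ℕ) : ℤ) ≤ (form6 z t m c d).re := by
    intro c d a b hab hN
    have hp := (form6_pos hz h c d (hnz hab)).1
    have := Nat.find_min' hex2 ⟨c, d, a, b, hab, hN, (Int.toNat_of_nonneg hp.le).symm⟩
    omega
  obtain ⟨U, Q, A, B, hAB, hUQN, hUQre⟩ := Nat.find_spec hex2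
  rw [← hUQre] at hmin2
  have hN100 : (N0 : ℤ) ≤ 100 := (hmin1 c d a b hab).trans (hs.trans hs0)
  obtain ⟨hre, hnorm⟩ := form6_pos hz h U Q (hnz hAB)
  obtain ⟨n, hn⟩ : ∃ n, n = form6 z t m U Q := ⟨_, rfl⟩
  have hu1 := hmin2 (⟨5, 2⟩ * U) (⟨5, 2⟩ * Q) (A * ⟨5, -2⟩) (B * ⟨5, -2⟩) (by
    have : (⟨5, 2⟩ : ℤ√6) * ⟨5, -2⟩ = 1 := by ext <;> simp
    linear_combination hAB + (A * U + B * Q) * this)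
  have hu2 := hmin2 (⟨5, -2⟩ * U) (⟨5, -2⟩ * Q) (A * ⟨5, 2⟩) (B * ⟨5, 2⟩) (by
    have : (⟨5, 2⟩ : ℤ√6) * ⟨5, -2⟩ = 1 := by ext <;> simp
    linear_combination hAB + (A * U + B * Q) * this)
  have e1 : form6 z t m (⟨5, 2⟩ * U) (⟨5, 2⟩ * Q) = (⟨5, 2⟩ * ⟨5, 2⟩) * n := by
    rw [hn]; unfold form6; ring
  have e2 : form6 z t m (⟨5, -2⟩ * U) (⟨5, -2⟩ * Q) = (⟨5, -2⟩ * ⟨5, -2⟩) * n := by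
    rw [hn]; unfold form6; ring
  rw [← hn] at hu1 hu2 hUQN hre hnorm
  rw [e1, Zsqrtd.norm_mul, Zsqrtd.norm_mul, norm6 ⟨5, 2⟩] at hu1
  rw [e2, Zsqrtd.norm_mul, Zsqrtd.norm_mul, norm6 ⟨5, -2⟩] at hu2
  have hb1 := hu1 (by rw [hUQN]; norm_num)
  have hb2 := hu2 (by rw [hUQN]; norm_num)
  simp only [Zsqrtd.re_mul, Zsqrtd.im_mul] at hb1 hb2
  refine ⟨U, Q, n, hn.symm, ?_⟩
  -- the companion vector
  set τ₀ := z * (U * (-B)) + t * (U * A + (-B) * Q) + m * (Q * A) with hτ₀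
  obtain ⟨s, hs1, hs2, hs3, hs4⟩ := residue6 n τ₀ hnorm
  set U' := -B - s * U with hU'
  set Q' := A - s * Q with hQ'
  have hdet : U * Q' - Q * U' = 1 := by rw [hU', hQ']; linear_combination hAB
  set τ := τ₀ - n * s with hτ
  have hτ' : τ = z * (U * U') + t * (U * Q' + U' * Q) + m * (Q * Q') := by
    rw [hτ, hτ₀, hU', hQ', hn]; unfold form6; ring
  have hnm : n * form6 z t m U' Q' = τ * τ + del6 := by
    have e : n * form6 z t m U' Q' - τ * τ = (z * m - t * t) * (U * Q' - Q * U') ^ 2 := by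
      rw [hτ', hn]; unfold form6; ring
    rw [hdet] at e
    linear_combination e - h
  have hok := check6_spec n.re n.im τ.re τ.im hre.le (by rw [norm6] at hUQN; nlinarith)
    (by linarith) (by linarith) (by rw [norm6] at hnorm; exact hnorm)
    (by rw [norm6] at hUQN; linarith) hs1 hs2 hs3 hs4
  rcases ok6_spec n τ _ hnorm hnm hok with h1 | ⟨X, W, hW, hlt⟩
  · exact h1
  · exfalso
    have e : form6 z t m (X * U + W * U') (X * Q + W * Q') =
        n * (X * X) + 2 * τ * (X * W) + form6 z t m U' Q' * (W * W) := by
      rw [hτ', hn]; unfold form6; ring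
    rw [← e] at hlt
    obtain ⟨c, d, a, b, hab, hle⟩ := form6_prim hz h (X * U + W * U') (X * Q + W * Q') (by
      rintro ⟨h1, h2⟩
      apply hW
      linear_combination U * h2 - Q * h1 - W * hdet)
    have := hmin1 c d a b hab
    linarith


/-- integrality of the quotient -/
theorem nu_exists {O : Type*} [CommRing O] (z e G H α α' : O) (h : α * α' = e * z ^ 5) :
    ∃ ν : O, (z * G + H * α) ^ 5 * α' = z ^ 5 * ν := by
  refine ⟨G ^ 5 * α' + e * (5 * (z * G) ^ 4 * H + 10 * (z * G) ^ 3 * H ^ 2 * α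
    + 10 * (z * G) ^ 2 * H ^ 3 * α ^ 2 + 5 * (z * G) * H ^ 4 * α ^ 3 + H ^ 5 * α ^ 4), ?_⟩
  linear_combination (5 * (z * G) ^ 4 * H + 10 * (z * G) ^ 3 * H ^ 2 * α
    + 10 * (z * G) ^ 2 * H ^ 3 * α ^ 2 + 5 * (z * G) * H ^ 4 * α ^ 3 + H ^ 5 * α ^ 4) * h

def O6 : Type := QuadraticAlgebra (ℤ√6) (-del6) 0

namespace O6

instance : CommRing O6 := inferInstanceAs (CommRing (QuadraticAlgebra (ℤ√6) (-del6) 0))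

def mk (a b : ℤ√6) : O6 := (⟨a, b⟩ : QuadraticAlgebra (ℤ√6) (-del6) 0)

def re (x : O6) : ℤ√6 := QuadraticAlgebra.re x

def im (x : O6) : ℤ√6 := QuadraticAlgebra.im x

theorem re_mk (a b : ℤ√6) : (mk a b).re = a := rfl

theorem im_mk (a b : ℤ√6) : (mk a b).im = b := rfl

theorem ext' {x y : O6} (h1 : x.re = y.re) (h2 : x.im = y.im) : x = y :=
  QuadraticAlgebra.ext h1 h2

theorem re_mul (x y : O6) : (x * y).re = x.re * y.re - del6 * (x.im * y.im) := by
  have : (x * y).re = x.re * y.re + -del6 * x.im * y.im := QuadraticAlgebra.re_mul x y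
  rw [this]; ring

theorem im_mul (x y : O6) : (x * y).im = x.re * y.im + x.im * y.re := by
  have : (x * y).im = x.re * y.im + x.im * y.re + 0 * x.im * y.im := QuadraticAlgebra.im_mul x y
  rw [this]; ring

theorem re_add (x y : O6) : (x + y).re = x.re + y.re := QuadraticAlgebra.re_add x y

theorem im_add (x y : O6) : (x + y).im = x.im + y.im := QuadraticAlgebra.im_add x y

theorem re_one : (1 : O6).re = 1 := rfl

theorem im_one : (1 : O6).im = 0 := rfl

theorem re_zero : (0 : O6).re = 0 := rfl

theorem im_zero : (0 : O6).im = 0 := rfl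

/-- the inclusion of the base ring -/
def of : ℤ√6 →+* O6 where
  toFun r := mk r 0
  map_one' := rfl
  map_zero' := rfl
  map_mul' a b := by apply ext' <;> simp only [re_mul, im_mul, re_mk, im_mk] <;> ring
  map_add' a b := by apply ext' <;> simp only [re_add, im_add, re_mk, im_mk] <;> ring

theorem re_of (r : ℤ√6) : (of r).re = r := rfl

theorem im_of (r : ℤ√6) : (of r).im = 0 := rfl

/-- relative conjugation -/
def conj : O6 →+* O6 where
  toFun x := mk x.re (-x.im)
  map_one' := by apply ext' <;> simp only [re_one, im_one, re_mk, im_mk] <;> ring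
  map_zero' := by apply ext' <;> simp only [re_zero, im_zero, re_mk, im_mk] <;> ring
  map_mul' a b := by apply ext' <;> simp only [re_mul, im_mul, re_mk, im_mk] <;> ring
  map_add' a b := by apply ext' <;> simp only [re_add, im_add, re_mk, im_mk] <;> ring

theorem re_conj (x : O6) : (conj x).re = x.re := rfl

theorem im_conj (x : O6) : (conj x).im = -x.im := rfl

theorem conj_conj (x : O6) : conj (conj x) = x := by
  apply ext' <;> simp only [re_conj, im_conj, neg_neg]

theorem conj_of (r : ℤ√6) : conj (of r) = of r := by
  apply ext' <;> simp only [re_conj, im_conj, re_of, im_of, neg_zero]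

/-- relative norm -/
def norm : O6 →* ℤ√6 where
  toFun x := x.re * x.re + del6 * (x.im * x.im)
  map_one' := by simp only [re_one, im_one]; ring
  map_mul' a b := by simp only [re_mul, im_mul]; ring

theorem norm_conj (x : O6) : norm (conj x) = norm x := by
  simp only [norm, MonoidHom.coe_mk, OneHom.coe_mk, re_conj, im_conj]; ring

theorem of_norm (x : O6) : of (norm x) = x * conj x := by
  apply ext' <;> simp only [norm, MonoidHom.coe_mk, OneHom.coe_mk, re_of, im_of, re_conj, im_conj,
    re_mul, im_mul] <;> ring

theorem norm_of (r : ℤ√6) : norm (of r) = r ^ 2 := by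
  simp only [norm, MonoidHom.coe_mk, OneHom.coe_mk, re_of, im_of]; ring

end O6

theorem normO6 (x : O6) : O6.norm x = x.re * x.re + del6 * (x.im * x.im) := rfl

/-- facts about elements of given small relative norm -/
theorem no_norm_re {k : ℤ} (hk : k = 5 ∨ k = 27) (x : O6) (h : (O6.norm x).re = k) : False := by
  rw [normO6, pd6_re] at h
  obtain ⟨a1, ha1⟩ : ∃ a1, a1 = x.re.re := ⟨_, rfl⟩
  obtain ⟨a2, ha2⟩ : ∃ a2, a2 = x.re.im := ⟨_, rfl⟩
  obtain ⟨b1, hb1⟩ : ∃ b1, b1 = x.im.re := ⟨_, rfl⟩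
  obtain ⟨b2, hb2⟩ : ∃ b2, b2 = x.im.im := ⟨_, rfl⟩
  rw [← ha1, ← ha2, ← hb1, ← hb2] at h
  clear ha1 ha2 hb1 hb2
  have hb2 : b2 = 0 := by
    have : b2 ^ 2 < 1 := by rcases hk with rfl | rfl <;> nlinarith [sq_nonneg a1, sq_nonneg a2, sq_nonneg (b1 - b2)]
    nlinarith
  subst hb2
  have h1 : a1 ^ 2 + 6 * (a2 ^ 2 + b1 ^ 2) = k := by linarith
  have h2 : a1 ≤ 5 := by rcases hk with rfl | rfl <;> nlinarith [sq_nonneg a2, sq_nonneg b1]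
  have h3 : -5 ≤ a1 := by rcases hk with rfl | rfl <;> nlinarith [sq_nonneg a2, sq_nonneg b1]
  have h4 : a2 ≤ 2 := by rcases hk with rfl | rfl <;> nlinarith [sq_nonneg a1, sq_nonneg b1]
  have h5 : -2 ≤ a2 := by rcases hk with rfl | rfl <;> nlinarith [sq_nonneg a1, sq_nonneg b1]
  have h6 : b1 ≤ 2 := by rcases hk with rfl | rfl <;> nlinarith [sq_nonneg a1, sq_nonneg a2]
  have h7 : -2 ≤ b1 := by rcases hk with rfl | rfl <;> nlinarith [sq_nonneg a1, sq_nonneg a2]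
  interval_cases a1 <;> interval_cases a2 <;> interval_cases b1 <;> omega

theorem norm_one_im (x : O6) (h : O6.norm x = 1) : x.im = 0 := by
  have h := congrArg Zsqrtd.re h
  rw [normO6, pd6_re, Zsqrtd.re_one] at h
  have h2 : x.im.im ^ 2 < 1 := by nlinarith [sq_nonneg x.re.re, sq_nonneg x.re.im, sq_nonneg (x.im.re - x.im.im)]
  have h3 : x.im.im = 0 := by nlinarith
  rw [h3] at h
  have h4 : x.im.re ^ 2 < 1 := by nlinarith [sq_nonneg x.re.re, sq_nonneg x.re.im]
  have h5 : x.im.re = 0 := by nlinarith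
  exact Zsqrtd.ext h5 h3

theorem cancelO6 {z : ℤ} (hz : z ≠ 0) {a b : O6} (h : O6.of z * a = O6.of z * b) : a = b := by
  have h1 := congrArg O6.re h
  have h2 := congrArg O6.im h
  simp only [O6.re_mul, O6.im_mul, O6.re_of, O6.im_of] at h1 h2
  apply O6.ext'
  · exact Zsqrtd.eq_of_smul_eq_smul_left hz (by linear_combination h1)
  · exact Zsqrtd.eq_of_smul_eq_smul_left hz (by linear_combination h2)

/-- reduction modulo the prime above 5 dividing `del6` -/
noncomputable def phi6 : ℤ√6 →+* ZMod 5 := Zsqrtd.lift ⟨1, by decide⟩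

theorem phi6_mk (a b : ℤ) : phi6 ⟨a, b⟩ = a + b := by
  simp [phi6, Zsqrtd.lift]

theorem fifth_im (β : O6) : phi6 (β ^ 5).im = 0 := by
  have h5 : (β ^ 5).im = 5 * (β.re ^ 4 * β.im) - 10 * (β.re ^ 2 * β.im ^ 3 * del6)
      + del6 * (β.im ^ 5 * del6) := by
    simp only [pow_succ, pow_zero, one_mul, O6.re_mul, O6.im_mul, O6.re_of, O6.im_of, O6.im_mk, O6.re_mk]
    ring
  have hd : phi6 del6 = 0 := by rw [del6, phi6_mk]; decide
  rw [h5]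
  simp only [map_add, map_sub, map_mul, hd, mul_zero, zero_mul, add_zero, sub_zero]
  have : phi6 5 = 0 := by rw [map_ofNat]; decide
  rw [this, zero_mul]

theorem core_alg {z : ℤ} (hz : 0 < z) (X Y e w s : ℤ√6)
    (hXY : X * X + del6 * (Y * Y) = e * (z : ℤ√6) ^ 5) (hws : w * Y + s * z = 1) :
    ∃ (n : ℤ√6) (ν β : O6),
    (n = 1 ∨ n = ⟨5, 2⟩ ∨ n = ⟨5, -2⟩ ∨ n = ⟨3, 1⟩ ∨ n = ⟨3, -1⟩) ∧
    O6.norm ν = e * n ^ 5 ∧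
    O6.of n ^ 5 * O6.mk X Y = O6.conj ν * β ^ 5 := by
  obtain ⟨t, ht⟩ : ∃ t, t = w * X := ⟨_, rfl⟩
  obtain ⟨m, hm⟩ : ∃ m, t * t + del6 = z * m := by
    refine ⟨w ^ 2 * e * z ^ 4 + del6 * s * (2 - s * z), ?_⟩
    have e1 : w * Y = 1 - s * z := by linear_combination hws
    have e2 : (w * Y) ^ 2 = (1 - s * z) ^ 2 := by rw [e1]
    rw [ht]
    linear_combination w ^ 2 * hXY - del6 * e2
  obtain ⟨U, Q, n, hf, hn⟩ := red6 hz hm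
  obtain ⟨α, hα⟩ : ∃ α : O6, α = O6.mk X Y := ⟨_, rfl⟩
  have hNα : O6.norm α = e * z ^ 5 := by
    rw [normO6, hα]; exact hXY
  have hαα : α * O6.conj α = O6.of e * O6.of z ^ 5 := by
    rw [← O6.of_norm, hNα, map_mul, map_pow]
  obtain ⟨ν, hν⟩ := nu_exists (O6.of z) (O6.of e) (O6.mk U (Q * s)) (O6.of (Q * w)) α (O6.conj α) hαα
  obtain ⟨β, hβ⟩ : ∃ β : O6, β = O6.mk (z * U + t * Q) Q := ⟨_, rfl⟩
  have hβ' : O6.of z * (O6.mk U (Q * s)) + (O6.of (Q * w)) * α = β := by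
    rw [hβ, hα]
    apply O6.ext' <;> simp only [O6.re_mk, O6.im_mk, O6.re_mul, O6.re_add,
      O6.im_add,
      O6.im_mul, O6.re_of, O6.im_of]
    · rw [ht]; ring
    · linear_combination Q * hws
  rw [hβ'] at hν
  have hNβ : O6.norm β = z * n := by
    rw [normO6, hβ, ← hf, form6_mul hm]; simp only [O6.re_mk, O6.im_mk]
  have hz5 : z ^ 5 ≠ 0 := by positivity
  have hz10 : z ^ 10 ≠ 0 := by positivity
  have hNν : O6.norm ν = e * n ^ 5 := by
    have := congrArg O6.norm hν
    rw [map_mul, map_mul, map_pow, map_pow, O6.norm_conj, hNα, hNβ,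
      O6.norm_of] at this
    apply Zsqrtd.eq_of_smul_eq_smul_left hz10
    push_cast
    linear_combination -this
  refine ⟨n, ν, β, hn, hNν, ?_⟩
  rw [← hα]
  have h1 := congrArg O6.conj hν
  rw [map_mul, map_mul, map_pow, map_pow, O6.conj_conj, O6.conj_of] at h1
  have h2 : β * O6.conj β = O6.of z * O6.of n := by
    rw [← O6.of_norm, hNβ, map_mul]
  obtain ⟨n', hn'⟩ : ∃ n' : O6, n' = O6.of n := ⟨_, rfl⟩
  rw [← hn'] at h2 ⊢
  apply cancelO6 hz5
  rw [Int.cast_pow, map_pow]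
  have h3 : (β * O6.conj β) ^ 5 = (O6.of z * n') ^ 5 := by rw [h2]
  linear_combination β ^ 5 * h1 - α * h3

theorem five_core {x y z : ℤ} (hz : 0 < z) (hc : IsCoprime (2 * (x * y)) z)
    (h : 3 * x ^ 4 + 12 * x ^ 2 * y ^ 2 + 2 * y ^ 4 = z ^ 5) : ∃ (n : ℤ√6) (ν β : O6),
    (n = 1 ∨ n = ⟨5, 2⟩ ∨ n = ⟨5, -2⟩ ∨ n = ⟨3, 1⟩ ∨ n = ⟨3, -1⟩) ∧
    O6.norm ν = ⟨5, -2⟩ * n ^ 5 ∧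
    O6.of n ^ 5 * O6.mk ⟨3 * x ^ 2 - 2 * y ^ 2, y ^ 2 - x ^ 2⟩ ⟨-2 * (x * y), x * y⟩ =
      O6.conj ν * β ^ 5 := by
  obtain ⟨w, s, hws⟩ := hc
  apply core_alg hz _ _ _ (w * ⟨2, 1⟩) s
  · rw [← Int.cast_pow, ← h, del6, Zsqrtd.ext_iff]
    simp only [Zsqrtd.re_add, Zsqrtd.im_add, Zsqrtd.re_mul, Zsqrtd.im_mul, Zsqrtd.re_intCast,
      Zsqrtd.im_intCast]
    constructor <;> ring
  · rw [Zsqrtd.ext_iff]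
    simp only [Zsqrtd.re_add, Zsqrtd.im_add, Zsqrtd.re_mul, Zsqrtd.im_mul, Zsqrtd.re_intCast,
      Zsqrtd.im_intCast, Zsqrtd.re_one, Zsqrtd.im_one]
    constructor
    · linear_combination hws
    · ring

theorem scaleO6 {n : ℤ√6} {ν : O6} (hNν : O6.norm ν = ⟨5, -2⟩ * n ^ 5) (c : ℤ√6) :
    O6.norm (O6.of c * ν) = c ^ 2 * (⟨5, -2⟩ * n ^ 5) := by
  rw [map_mul, hNν, O6.norm_of]

theorem five_fin {x y : ℤ} (n : ℤ√6) (ν β : O6) (hNν : O6.norm ν = ⟨5, -2⟩ * n ^ 5)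
    (hmain : O6.of n ^ 5 * O6.mk ⟨3 * x ^ 2 - 2 * y ^ 2, y ^ 2 - x ^ 2⟩ ⟨-2 * (x * y), x * y⟩ =
      O6.conj ν * β ^ 5) (c c' : ℤ√6) (hcc : c' * c = 1) (hc1 : c ^ 2 * (⟨5, -2⟩ * n ^ 5) = 1)
    (hn0 : phi6 n ≠ 0) : (5 : ℤ) ∣ x * y := by
  have h1 := norm_one_im _ ((scaleO6 hNν c).trans hc1)
  have hνim : ν.im = 0 := by
    simp only [O6.im_mul, O6.re_of, O6.im_of] at h1
    linear_combination c' * h1 - ν.im * hcc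
  have h3 := congrArg (fun q : O6 => phi6 q.im) hmain
  have e1 : (O6.of n ^ 5 * O6.mk ⟨3 * x ^ 2 - 2 * y ^ 2, y ^ 2 - x ^ 2⟩
      ⟨-2 * (x * y), x * y⟩).im
      = n ^ 5 * ⟨-2 * (x * y), x * y⟩ := by
    simp only [pow_succ, pow_zero, one_mul, O6.re_mul, O6.im_mul, O6.re_of, O6.im_of, O6.im_mk, O6.re_mk]
    ring
  have e2 : (O6.conj ν * β ^ 5).im = ν.re * (β ^ 5).im := by
    rw [O6.im_mul, O6.im_conj, O6.re_conj, hνim]; ring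
  simp only [e1, e2, map_mul, fifth_im, mul_zero, map_pow] at h3
  have h4 : phi6 ⟨-2 * (x * y), x * y⟩ = 0 := by
    have : Fact (Nat.Prime 5) := ⟨by norm_num⟩
    rcases mul_eq_zero.1 h3 with h | h
    · exact absurd (pow_eq_zero_iff (by norm_num) |>.1 h) hn0
    · exact h
  rw [phi6_mk] at h4
  have h5 : ((-(x * y) : ℤ) : ZMod 5) = 0 := by
    push_cast at h4 ⊢
    linear_combination h4
  rw [ZMod.intCast_zmod_eq_zero_iff_dvd] at h5
  exact (dvd_neg.1 h5)

theorem five_dvd_xy {x y z : ℤ} (hz : 0 < z) (hc : IsCoprime (2 * (x * y)) z)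
    (h : 3 * x ^ 4 + 12 * x ^ 2 * y ^ 2 + 2 * y ^ 4 = z ^ 5) : (5 : ℤ) ∣ x * y := by
  obtain ⟨n, ν, β, hn, hNν, hmain⟩ := five_core hz hc h
  have hinv : (⟨5, 2⟩ : ℤ√6) * ⟨5, -2⟩ = 1 := by ext <;> simp
  have hinv' : (⟨5, -2⟩ : ℤ√6) * ⟨5, 2⟩ = 1 := by ext <;> simp
  rcases hn with rfl | rfl | rfl | rfl | rfl
  · exfalso
    exact no_norm_re (Or.inl rfl) ν (by rw [hNν]; simp)
  · refine five_fin _ ν β hNν hmain (⟨5, -2⟩ ^ 2) (⟨5, 2⟩ ^ 2) (by rw [← mul_pow, hinv, one_pow]) ?_ ?_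
    · ext <;> simp [pow_succ]
    · rw [phi6_mk]; decide
  · refine five_fin _ ν β hNν hmain (⟨5, 2⟩ ^ 3) (⟨5, -2⟩ ^ 3) (by rw [← mul_pow, hinv', one_pow]) ?_ ?_
    · ext <;> simp [pow_succ]
    · rw [phi6_mk]; decide
  · exfalso
    refine no_norm_re (Or.inr rfl) _ (?_ : (O6.norm (O6.of ⟨5, -2⟩ * ν)).re = 27)
    rw [scaleO6 hNν]; simp [pow_succ]
  · exfalso
    refine no_norm_re (Or.inr rfl) _ (?_ : (O6.norm (O6.of (⟨5, 2⟩ ^ 2) * ν)).re = 27)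
    rw [scaleO6 hNν]; simp [pow_succ]


theorem not30 (b : ℤ) : b * b ≠ 30 := by
  intro h
  have h1 : b < 6 := by nlinarith
  have h2 : -6 < b := by nlinarith
  interval_cases b <;> omega

theorem red30_base {a b c : ℤ} (ha : a ≠ 0) (h : b * b - 30 = a * c) (hb1 : 2 * b ≤ |a|)
    (hb2 : - |a| ≤ 2 * b) (h5 : |a| ≤ 5) :
    ∃ U Y n : ℤ, a * U ^ 2 + 2 * b * U * Y + c * Y ^ 2 = n ∧
      (n = 1 ∨ n = -1 ∨ n = 3 ∨ n = -3 ∨ n = 5 ∨ n = -5) := by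
  by_cases h2 : a = 2
  · subst h2
    norm_num at hb1 hb2
    have hb : b = 0 ∨ b = 1 ∨ b = -1 := by omega
    rcases hb with rfl | rfl | rfl
    · have : c = -15 := by omega
      subst this
      exact ⟨3, 1, 3, by norm_num, by norm_num⟩
    · omega
    · omega
  by_cases h2' : a = -2
  · subst h2'
    norm_num at hb1 hb2
    have hb : b = 0 ∨ b = 1 ∨ b = -1 := by omega
    rcases hb with rfl | rfl | rfl
    · have : c = 15 := by omega
      subst this
      exact ⟨3, 1, -3, by norm_num, by norm_num⟩
    · omega
    · omega
  refine ⟨1, 0, a, by ring, ?_⟩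
  have h6 := abs_le.mp h5
  by_contra hcon
  have h4 : a = 4 ∨ a = -4 := by omega
  have hd : (4 : ℤ) ∣ b * b - 30 := by
    rcases h4 with rfl | rfl
    · exact ⟨c, h⟩
    · exact ⟨-c, by linarith⟩
  have h7 : b ≤ 2 ∧ -2 ≤ b := by
    rcases h4 with rfl | rfl <;> norm_num at hb1 hb2 <;> omega
  obtain ⟨h8, h9⟩ := h7
  interval_cases b <;> omega

theorem red30 (N : ℕ) : ∀ a b c : ℤ, a.natAbs ≤ N → b * b - 30 = a * c →
    ∃ U Y n : ℤ, a * U ^ 2 + 2 * b * U * Y + c * Y ^ 2 = n ∧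
      (n = 1 ∨ n = -1 ∨ n = 3 ∨ n = -3 ∨ n = 5 ∨ n = -5) := by
  induction N with
  | zero =>
    intro a b c ha h
    have : a = 0 := by omega
    subst this
    exact absurd (by linarith : b * b = 30) (not30 b)
  | succ N ih =>
    intro a b c ha h
    have ha0 : a ≠ 0 := by
      rintro rfl
      exact not30 b (by linarith)
    have hpos : 0 < |a| := abs_pos.mpr ha0
    obtain ⟨b', k, hb', hb1, hb2⟩ : ∃ b' k : ℤ, b = b' + k * a ∧ 2 * b' ≤ |a| ∧ - |a| ≤ 2 * b' := by
      refine ⟨(b + |a| / 2) % |a| - |a| / 2, (b + |a| / 2) / |a| * a.sign, ?_, ?_, ?_⟩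
      · have := Int.emod_add_mul_ediv (b + |a| / 2) |a|
        have h1 : a.sign * a = |a| := Int.sign_mul_self_eq_abs a
        linear_combination -this - ((b + |a| / 2) / |a|) * h1
      · have := Int.emod_lt_of_pos (b + |a| / 2) hpos
        omega
      · have := Int.emod_nonneg (b + |a| / 2) hpos.ne'
        omega
    obtain ⟨c', hc'⟩ : ∃ c', c' = c - 2 * k * b' - k ^ 2 * a := ⟨_, rfl⟩
    have h' : b' * b' - 30 = a * c' := by
      rw [hc']; rw [hb'] at h; linear_combination h
    by_cases h5 : |a| ≤ 5
    · obtain ⟨U, Y, n, hn, hc⟩ := red30_base ha0 h' hb1 hb2 h5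
      refine ⟨U - k * Y, Y, n, ?_, hc⟩
      rw [← hn, hc', hb']; ring
    · have hlt : c'.natAbs ≤ N := by
        have h6 : |a| * |c'| = |b' * b' - 30| := by rw [← abs_mul, h']
        have h7 : 4 * (b' * b') ≤ |a| * |a| := by nlinarith
        have h8 : |c'| < |a| := by
          by_contra hcon
          have : |a| * |a| ≤ |a| * |c'| := by nlinarith
          rw [h6] at this
          rcases abs_cases (b' * b' - 30) with h9 | h9 <;> nlinarith [mul_self_nonneg b']
        have h10 : (c'.natAbs : ℤ) < a.natAbs := by
          rw [Int.natCast_natAbs, Int.natCast_natAbs]; exact h8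
        omega
      obtain ⟨U, Y, n, hn, hc⟩ := ih c' (-b') a hlt (by linear_combination h')
      refine ⟨Y * (-1) - k * U, U, n, ?_, hc⟩
      rw [← hn, hb']
      have : c = c' + 2 * k * b' + k ^ 2 * a := by rw [hc']; ring
      rw [this]; ring

theorem sq_mod3 {p q : ℤ} {M : ℤ} (h : p ^ 2 - 30 * q ^ 2 = 9 * M) :
    ∃ p' q', p = 3 * p' ∧ q = 3 * q' ∧ p' ^ 2 - 30 * q' ^ 2 = M := by
  obtain ⟨p', rfl⟩ : (3 : ℤ) ∣ p := Int.prime_three.dvd_of_dvd_pow (n := 2) (by omega)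
  have h1 : 3 * p' ^ 2 - 10 * q ^ 2 = 3 * M := by linarith
  obtain ⟨q', rfl⟩ : (3 : ℤ) ∣ q := Int.prime_three.dvd_of_dvd_pow (n := 2) (by omega)
  exact ⟨p', q', rfl, rfl, by linarith⟩

theorem sq_mod5 {p q : ℤ} {M : ℤ} (h : p ^ 2 - 30 * q ^ 2 = 25 * M) :
    ∃ p' q', p = 5 * p' ∧ q = 5 * q' ∧ p' ^ 2 - 30 * q' ^ 2 = M := by
  have h5 : Prime (5 : ℤ) := by norm_num
  obtain ⟨p', rfl⟩ : (5 : ℤ) ∣ p := h5.dvd_of_dvd_pow (n := 2) (by omega)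
  have h1 : 5 * p' ^ 2 - 6 * q ^ 2 = 5 * M := by linarith
  obtain ⟨q', rfl⟩ : (5 : ℤ) ∣ q := h5.dvd_of_dvd_pow (n := 2) (by omega)
  exact ⟨p', q', rfl, rfl, by linarith⟩

theorem sqm5 (p : ℤ) : p ^ 2 % 5 = 0 ∨ p ^ 2 % 5 = 1 ∨ p ^ 2 % 5 = 4 := by
  have : p % 5 = 0 ∨ p % 5 = 1 ∨ p % 5 = 2 ∨ p % 5 = 3 ∨ p % 5 = 4 := by omega
  rcases this with h | h | h | h | h <;> simp [pow_two, Int.mul_emod, h]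

theorem sqm3 (p : ℤ) : p ^ 2 % 3 = 0 ∨ p ^ 2 % 3 = 1 := by
  have : p % 3 = 0 ∨ p % 3 = 1 ∨ p % 3 = 2 := by omega
  rcases this with h | h | h <;> simp [pow_two, Int.mul_emod, h]

theorem nu30 {p q n : ℤ} (hn : n = 1 ∨ n = -1 ∨ n = 3 ∨ n = -3 ∨ n = 5 ∨ n = -5)
    (h : p ^ 2 - 30 * q ^ 2 = 3 * n ^ 5) :
    n = 3 ∧ ∃ p' q', p = 27 * p' ∧ q = 27 * q' ∧ p' ^ 2 - 30 * q' ^ 2 = 1 := by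
  have key5 : ∀ (p q : ℤ) (e : ℤ), (e = 1 ∨ e = -1) → p ^ 2 - 30 * q ^ 2 = 3 * (5 ^ 5 * e) → False := by
    intro p q e he h
    obtain ⟨p, q, -, -, h⟩ := sq_mod5 (p := p) (q := q) (M := 375 * e) (by linarith)
    obtain ⟨p, q, -, -, h⟩ := sq_mod5 (p := p) (q := q) (M := 15 * e) (by linarith)
    obtain ⟨p', rfl⟩ : (5 : ℤ) ∣ p :=
      (by norm_num : Prime (5 : ℤ)).dvd_of_dvd_pow (n := 2) (by omega)
    have h1 : 5 * p' ^ 2 - 6 * q ^ 2 = 3 * e := by linarith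
    have := sqm5 q
    omega
  have key3 : ∀ (p q : ℤ) (e : ℤ), p ^ 2 - 30 * q ^ 2 = 729 * e →
      ∃ p' q', p = 27 * p' ∧ q = 27 * q' ∧ p' ^ 2 - 30 * q' ^ 2 = e := by
    intro p q e h
    obtain ⟨p1, q1, rfl, rfl, h1⟩ := sq_mod3 (p := p) (q := q) (M := 81 * e) (by linarith)
    obtain ⟨p2, q2, rfl, rfl, h2⟩ := sq_mod3 (p := p1) (q := q1) (M := 9 * e) (by linarith)
    obtain ⟨p3, q3, rfl, rfl, h3⟩ := sq_mod3 (p := p2) (q := q2) (M := e) (by linarith)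
    exact ⟨p3, q3, by ring, by ring, h3⟩
  have := sqm5 p
  rcases hn with rfl | rfl | rfl | rfl | rfl | rfl
  · omega
  · omega
  · exact ⟨rfl, key3 p q 1 (by linarith)⟩
  · obtain ⟨p', q', -, -, h⟩ := key3 p q (-1) (by linarith)
    have := sqm3 p'
    omega
  · exact (key5 p q 1 (by norm_num) (by linarith)).elim
  · exact (key5 p q (-1) (by norm_num) (by linarith)).elim


theorem pell_small {X Y : ℤ} (h1 : 1 < X) (h2 : X ≤ 10) (h3 : Y < 2) (h4 : -2 < Y)
    (h : X ^ 2 - 30 * Y ^ 2 = 1) : False := by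
  interval_cases Y <;> interval_cases X <;> omega

theorem pell30 {p q : ℤ} (h : p ^ 2 - 30 * q ^ 2 = 1) :
    ∃ (r : ℕ) (a b : ℤ), r < 5 ∧ a ^ 2 - 30 * b ^ 2 = 1 ∧
      (⟨p, q⟩ : ℤ√30) = (⟨11, 2⟩ : ℤ√30) ^ r * (⟨a, b⟩ : ℤ√30) ^ 5 := by
  obtain ⟨ε, hε⟩ : ∃ ε : Pell.Solution₁ 30, ε = Pell.Solution₁.mk 11 2 (by norm_num) := ⟨_, rfl⟩
  have hεx : ε.x = 11 := by rw [hε, Pell.Solution₁.x_mk]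
  have hεy : ε.y = 2 := by rw [hε, Pell.Solution₁.y_mk]
  have hεc : (ε : ℤ√30) = ⟨11, 2⟩ := by rw [hε, Pell.Solution₁.coe_mk]
  have hf : Pell.IsFundamental ε := by
    refine ⟨by rw [hεx]; norm_num, by rw [hεy]; norm_num, ?_⟩
    intro b hb
    rw [hεx]
    have hp := b.prop
    by_contra hcon
    have hlt : b.x ≤ 10 := by omega
    have h1 : b.y < 2 := by nlinarith
    have h2 : -2 < b.y := by nlinarith
    exact pell_small hb hlt h1 h2 hp
  have main : ∀ n : ℤ, ∃ (r : ℕ) (δ : Pell.Solution₁ 30), r < 5 ∧ ε ^ n = ε ^ r * δ ^ 5 := by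
    intro n
    refine ⟨(n % 5).toNat, ε ^ (n / 5), by omega, ?_⟩
    rw [← zpow_natCast ε, ← zpow_natCast (ε ^ (n / 5)), ← zpow_mul, ← zpow_add]
    congr 1
    push_cast
    omega
  have main2 : ∃ (r : ℕ) (δ : Pell.Solution₁ 30), r < 5 ∧
      Pell.Solution₁.mk p q h = ε ^ r * δ ^ 5 := by
    obtain ⟨n, hn | hn⟩ := hf.eq_zpow_or_neg_zpow (Pell.Solution₁.mk p q h)
    · obtain ⟨r, δ, hr, hd⟩ := main n
      exact ⟨r, δ, hr, hn.trans hd⟩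
    · obtain ⟨r, δ, hr, hd⟩ := main n
      refine ⟨r, -δ, hr, ?_⟩
      rw [hn, hd, Odd.neg_pow (by decide), mul_neg]
  obtain ⟨r, δ, hr, hd⟩ := main2
  refine ⟨r, δ.x, δ.y, hr, δ.prop, ?_⟩
  have := congrArg (fun s : Pell.Solution₁ 30 => (s : ℤ√30)) hd
  rw [← hεc]
  exact this

theorem fifth30 (b v : ℤ) : (⟨b, v⟩ : ℤ√30) ^ 5 =
    ⟨b ^ 5 + 300 * b ^ 3 * v ^ 2 + 4500 * b * v ^ 4,
      5 * b ^ 4 * v + 300 * b ^ 2 * v ^ 3 + 900 * v ^ 5⟩ := by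
  rw [Zsqrtd.ext_iff]
  simp only [pow_succ, pow_zero, one_mul, Zsqrtd.re_mul, Zsqrtd.im_mul]
  constructor <;> ring

/-- the representation `9 α = ε ^ r β ^ 5` -/
theorem rep30 {z X Y : ℤ} (hz : 0 < z) (hXY : X ^ 2 - 30 * Y ^ 2 = 3 * z ^ 5)
    (hc : IsCoprime Y z) :
    ∃ (r : ℕ) (u v : ℤ), r < 5 ∧ 3 * u ^ 2 - 10 * v ^ 2 = z ∧
      (9 : ℤ√30) * ⟨X, Y⟩ = (⟨11, 2⟩ : ℤ√30) ^ r * (⟨3 * u, v⟩ : ℤ√30) ^ 5 := by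
  obtain ⟨w, s, hws⟩ := hc
  obtain ⟨t, ht⟩ : ∃ t, t = w * X := ⟨_, rfl⟩
  obtain ⟨m, hm⟩ : ∃ m, t * t - 30 = z * m := by
    refine ⟨w ^ 2 * 3 * z ^ 4 - 30 * s * (2 - s * z), ?_⟩
    have e1 : w * Y = 1 - s * z := by linear_combination hws
    have e2 : (w * Y) ^ 2 = (1 - s * z) ^ 2 := by rw [e1]
    rw [ht]
    linear_combination w ^ 2 * hXY + 30 * e2
  obtain ⟨U, Q, n, hf, hn⟩ := red30 z.natAbs z t m le_rfl hm
  obtain ⟨α, hα⟩ : ∃ α : ℤ√30, α = ⟨X, Y⟩ := ⟨_, rfl⟩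
  obtain ⟨α', hα'⟩ : ∃ α : ℤ√30, α = ⟨X, -Y⟩ := ⟨_, rfl⟩
  have hαα : α * α' = (3 : ℤ√30) * (z : ℤ√30) ^ 5 := by
    have : (3 : ℤ√30) * (z : ℤ√30) ^ 5 = ((3 * z ^ 5 : ℤ) : ℤ√30) := by push_cast; ring
    rw [this, ← hXY, hα, hα', Zsqrtd.ext_iff]
    simp only [Zsqrtd.re_mul, Zsqrtd.im_mul, Zsqrtd.re_intCast, Zsqrtd.im_intCast]
    constructor <;> ring
  obtain ⟨ν, hν⟩ := nu_exists (z : ℤ√30) 3 ⟨U, Q * s⟩ ((Q * w : ℤ) : ℤ√30) α α' hαα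
  obtain ⟨β, hβ⟩ : ∃ β : ℤ√30, β = ⟨z * U + t * Q, Q⟩ := ⟨_, rfl⟩
  have hβ' : (z : ℤ√30) * ⟨U, Q * s⟩ + ((Q * w : ℤ) : ℤ√30) * α = β := by
    rw [hβ, hα, Zsqrtd.ext_iff]
    simp only [Zsqrtd.re_add, Zsqrtd.im_add, Zsqrtd.re_mul, Zsqrtd.im_mul, Zsqrtd.re_intCast,
      Zsqrtd.im_intCast]
    constructor
    · rw [ht]; ring
    · linear_combination Q * hws
  rw [hβ'] at hν
  have hNβ : (z * U + t * Q) ^ 2 - 30 * Q ^ 2 = z * n := by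
    rw [← hf]; linear_combination Q ^ 2 * hm
  have hNβ2 : β.norm = z * n := by rw [← hNβ, hβ, Zsqrtd.norm_def]; ring
  have hNα2 : α.norm = 3 * z ^ 5 := by rw [← hXY, hα, Zsqrtd.norm_def]; ring
  have hNα2' : α'.norm = 3 * z ^ 5 := by rw [← hXY, hα', Zsqrtd.norm_def]; ring
  have hz0 : z ≠ 0 := hz.ne'
  have hz5 : z ^ 5 ≠ 0 := pow_ne_zero _ hz0
  have hz10 : z ^ 10 ≠ 0 := pow_ne_zero _ hz0
  have hNν : ν.norm = 3 * n ^ 5 := by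
    have h1 := congrArg Zsqrtd.norm hν
    have e5 : β ^ 5 = β * β * β * β * β := by ring
    have e5' : (z : ℤ√30) ^ 5 = ((z ^ 5 : ℤ) : ℤ√30) := by push_cast; ring
    rw [e5, e5'] at h1
    simp only [Zsqrtd.norm_mul, Zsqrtd.norm_intCast, hNβ2, hNα2'] at h1
    apply mul_left_cancel₀ hz10
    linear_combination -h1
  have hNν' : ν.re ^ 2 - 30 * ν.im ^ 2 = 3 * n ^ 5 := by
    rw [← hNν, Zsqrtd.norm_def]; ring
  obtain ⟨rfl, p, q, hp, hq, hpq⟩ := nu30 hn hNν'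
  obtain ⟨b, hb⟩ : (3 : ℤ) ∣ z * U + t * Q :=
    Int.prime_three.dvd_of_dvd_pow (n := 2) (by omega)
  -- conjugate
  obtain ⟨ν', hν'⟩ : ∃ ν' : ℤ√30, ν' = ⟨p, -q⟩ := ⟨_, rfl⟩
  have hνν : ν' * ν = 27 := by
    have : ν = ⟨27 * p, 27 * q⟩ := by rw [Zsqrtd.ext_iff]; exact ⟨hp, hq⟩
    have h27 : (27 : ℤ√30) = ((27 : ℤ) : ℤ√30) := by norm_num
    rw [this, hν', h27, Zsqrtd.ext_iff]
    simp only [Zsqrtd.re_mul, Zsqrtd.im_mul, Zsqrtd.re_intCast, Zsqrtd.im_intCast]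
    constructor
    · linear_combination 27 * hpq
    · ring
  have hfin : (9 : ℤ√30) * α = ν' * β ^ 5 := by
    apply Zsqrtd.eq_of_smul_eq_smul_left (a := 3 * z ^ 5) (by positivity)
    push_cast
    linear_combination -(ν' * α) * hν - z ^ 5 * α * hνν + ν' * β ^ 5 * hαα
  obtain ⟨r, c, d, hr, hcd, hre⟩ := pell30 (p := p) (q := -q) (by linear_combination hpq)
  refine ⟨r, c * b + 10 * d * Q, c * Q + 3 * d * b, hr, ?_, ?_⟩
  · rw [hb] at hNβ
    have h3 : 3 * (3 * b ^ 2 - 10 * Q ^ 2) = 3 * z := by linear_combination hNβ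
    have h4 := mul_left_cancel₀ (by norm_num : (3 : ℤ) ≠ 0) h3
    linear_combination h4 + (3 * b ^ 2 - 10 * Q ^ 2) * hcd
  · rw [← hα, hfin, hν', hre, hβ, hb, mul_assoc, ← mul_pow]
    congr 2
    rw [Zsqrtd.ext_iff]
    simp only [Zsqrtd.re_mul, Zsqrtd.im_mul]
    constructor <;> ring

theorem eps_mul (c d A B R S : ℤ)
    (h : (9 : ℤ√30) * ⟨A, B⟩ = (⟨c, d⟩ : ℤ√30) * ⟨R, S⟩) :
    9 * A = c * R + 30 * d * S ∧ 9 * B = c * S + d * R := by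
  have h9 : (9 : ℤ√30) = ((9 : ℤ) : ℤ√30) := by norm_num
  rw [h9, Zsqrtd.ext_iff] at h
  simp only [Zsqrtd.re_mul, Zsqrtd.im_mul, Zsqrtd.re_intCast, Zsqrtd.im_intCast] at h
  exact ⟨by linear_combination h.1, by linear_combination h.2⟩

theorem eps_step (c d : ℤ) (r : ℕ) (h : (⟨11, 2⟩ : ℤ√30) ^ r = ⟨c, d⟩) :
    (⟨11, 2⟩ : ℤ√30) ^ (r + 1) = ⟨11 * c + 60 * d, 11 * d + 2 * c⟩ := by
  rw [pow_succ, h, Zsqrtd.ext_iff]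
  simp only [Zsqrtd.re_mul, Zsqrtd.im_mul]
  constructor <;> ring

theorem eps30 (r : ℕ) (hr : r < 5) (A B R S : ℤ)
    (h : (9 : ℤ√30) * ⟨A, B⟩ = (⟨11, 2⟩ : ℤ√30) ^ r * ⟨R, S⟩) :
    (9 * A = R ∧ 9 * B = S) ∨
    (9 * A = 11 * R + 60 * S ∧ 9 * B = 2 * R + 11 * S) ∨
    (9 * A = 241 * R + 1320 * S ∧ 9 * B = 44 * R + 241 * S) ∨
    (9 * A = 5291 * R + 28980 * S ∧ 9 * B = 966 * R + 5291 * S) ∨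
    (9 * A = 116161 * R + 636240 * S ∧ 9 * B = 21208 * R + 116161 * S) := by
  have e0 : (⟨11, 2⟩ : ℤ√30) ^ 0 = ⟨1, 0⟩ := pow_zero _
  have e1 := eps_step _ _ _ e0
  have e2 := eps_step _ _ _ e1
  have e3 := eps_step _ _ _ e2
  have e4 := eps_step _ _ _ e3
  norm_num only at e1 e2 e3 e4
  have hr' : r = 0 ∨ r = 1 ∨ r = 2 ∨ r = 3 ∨ r = 4 := by omega
  rcases hr' with rfl | rfl | rfl | rfl | rfl
  · rw [e0] at h
    have := eps_mul _ _ _ _ _ _ h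
    left
    exact ⟨by linear_combination this.1, by linear_combination this.2⟩
  · rw [e1] at h
    have := eps_mul _ _ _ _ _ _ h
    right; left
    exact ⟨by linear_combination this.1, by linear_combination this.2⟩
  · rw [e2] at h
    have := eps_mul _ _ _ _ _ _ h
    right; right; left
    exact ⟨by linear_combination this.1, by linear_combination this.2⟩
  · rw [e3] at h
    have := eps_mul _ _ _ _ _ _ h
    right; right; right; left
    exact ⟨by linear_combination this.1, by linear_combination this.2⟩
  · rw [e4] at h
    have := eps_mul _ _ _ _ _ _ h
    right; right; right; right
    exact ⟨by linear_combination this.1, by linear_combination this.2⟩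


theorem caseA {y u v z : ℤ} (hy3 : ¬ (3 : ℤ) ∣ y) (hyz : IsCoprime y z)
    (hz : 3 * u ^ 2 - 10 * v ^ 2 = z)
    (h : y ^ 2 = 5 * v * (9 * u ^ 4 + 60 * u ^ 2 * v ^ 2 + 20 * v ^ 4)) : False := by
  have h1 : IsCoprime (5 * v) z := by
    have h2 : IsCoprime (y ^ 2) z := hyz.pow_left
    rw [h] at h2
    exact h2.of_mul_left_left
  have h2 : IsCoprime (5 * v) (3 * u ^ 2) := by
    have : 3 * u ^ 2 = z + (5 * v) * (2 * v) := by rw [← hz]; ring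
    rw [this]
    exact IsCoprime.add_mul_left_right h1 _
  have h3 : IsCoprime (5 * v) (9 * u ^ 4 + 60 * u ^ 2 * v ^ 2 + 20 * v ^ 4) := by
    have : 9 * u ^ 4 + 60 * u ^ 2 * v ^ 2 + 20 * v ^ 4 =
        (3 * u ^ 2) ^ 2 + (5 * v) * (12 * u ^ 2 * v + 4 * v ^ 3) := by ring
    rw [this]
    exact IsCoprime.add_mul_left_right h2.pow_right _
  obtain ⟨s, hs⟩ := Int.sq_of_isCoprime h3.symm (by rw [h]; ring :
    (9 * u ^ 4 + 60 * u ^ 2 * v ^ 2 + 20 * v ^ 4) * (5 * v) = y ^ 2)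
  have hv3 : ¬ (3 : ℤ) ∣ v := by
    rintro ⟨k, rfl⟩
    exact hy3 (Int.prime_three.dvd_of_dvd_pow (n := 2)
      ⟨5 * k * (9 * u ^ 4 + 60 * u ^ 2 * (3 * k) ^ 2 + 20 * (3 * k) ^ 4), by rw [h]; ring⟩)
  have hvm : v ^ 2 % 3 = 1 := by
    rcases sqm3 v with h0 | h0
    · exact absurd (Int.prime_three.dvd_of_dvd_pow (Int.dvd_of_emod_eq_zero h0)) hv3
    · exact h0
  have hv4 : v ^ 4 % 3 = 1 := by
    have : v ^ 4 = v ^ 2 * v ^ 2 := by ring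
    rw [this, Int.mul_emod, hvm]; norm_num
  have hq : 9 * u ^ 4 + 60 * u ^ 2 * v ^ 2 + 20 * v ^ 4 =
      3 * (3 * u ^ 4 + 20 * u ^ 2 * v ^ 2) + 20 * v ^ 4 := by ring
  rcases hs with hs | hs
  · have := sqm3 s
    omega
  · have : 0 ≤ 9 * u ^ 4 + 60 * u ^ 2 * v ^ 2 := by positivity
    have h4 : 0 ≤ v ^ 4 := by positivity
    have h5 : 0 ≤ s ^ 2 := by positivity
    omega

theorem caseB {x u v z : ℤ} (hx2 : ¬ (2 : ℤ) ∣ x) (hxz : IsCoprime x z)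
    (hz : 2 * u ^ 2 - 15 * v ^ 2 = z)
    (h : -x ^ 2 = 5 * v * (4 * u ^ 4 + 60 * u ^ 2 * v ^ 2 + 45 * v ^ 4)) : False := by
  have h1 : IsCoprime (5 * v) z := by
    have h2 : IsCoprime (-x ^ 2) z := hxz.pow_left.neg_left
    rw [h] at h2
    exact h2.of_mul_left_left
  have h2 : IsCoprime (5 * v) (2 * u ^ 2) := by
    have : 2 * u ^ 2 = z + (5 * v) * (3 * v) := by rw [← hz]; ring
    rw [this]
    exact IsCoprime.add_mul_left_right h1 _
  have h3 : IsCoprime (5 * v) (4 * u ^ 4 + 60 * u ^ 2 * v ^ 2 + 45 * v ^ 4) := by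
    have : 4 * u ^ 4 + 60 * u ^ 2 * v ^ 2 + 45 * v ^ 4 =
        (2 * u ^ 2) ^ 2 + (5 * v) * (12 * u ^ 2 * v + 9 * v ^ 3) := by ring
    rw [this]
    exact IsCoprime.add_mul_left_right h2.pow_right _
  obtain ⟨s, hs⟩ := Int.sq_of_isCoprime h3.symm.neg_right (by linear_combination h :
    (4 * u ^ 4 + 60 * u ^ 2 * v ^ 2 + 45 * v ^ 4) * (-(5 * v)) = x ^ 2)
  have hv2 : ¬ (2 : ℤ) ∣ v := by
    rintro ⟨k, rfl⟩
    refine hx2 (Int.prime_two.dvd_of_dvd_pow (n := 2)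
      ⟨-(5 * k * (4 * u ^ 4 + 60 * u ^ 2 * (2 * k) ^ 2 + 45 * (2 * k) ^ 4)), ?_⟩)
    linear_combination -h
  have key : ∀ u v s : ZMod 8, v * v = 1 →
      4 * u ^ 4 + 60 * u ^ 2 * v ^ 2 + 45 * v ^ 4 ≠ s ^ 2 := by decide
  rcases hs with hs | hs
  · refine key u v s ?_ (by exact_mod_cast congrArg (Int.cast : ℤ → ZMod 8) hs)
    have : (8 : ℤ) ∣ v * v - 1 := by
      obtain ⟨k, hk⟩ : ∃ k, v = 2 * k + 1 := ⟨v / 2, by omega⟩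
      obtain ⟨j, hj⟩ := Int.even_mul_succ_self k
      exact ⟨j, by rw [hk]; linear_combination 4 * hj⟩
    have h8 := (ZMod.intCast_zmod_eq_zero_iff_dvd (v * v - 1) 8).mpr (by exact_mod_cast this)
    push_cast at h8
    linear_combination h8
  · have : 0 ≤ 4 * u ^ 4 + 60 * u ^ 2 * v ^ 2 := by positivity
    have h4 : 0 < v ^ 4 := by
      have : v ≠ 0 := by rintro rfl; exact hv2 (dvd_zero _)
      positivity
    have h5 : 0 ≤ s ^ 2 := by positivity
    omega

theorem mod5_a {x y R S : ℤ} (h : (5 : ℤ) ∣ x ∨ (5 : ℤ) ∣ y) (hS : (5 : ℤ) ∣ S)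
    (h1 : 9 * (3 * x + 6 * y) = 11 * R + 60 * S) (h2 : 9 * y = 2 * R + 11 * S) :
    (5 : ℤ) ∣ x ∧ (5 : ℤ) ∣ y := by
  obtain ⟨T, rfl⟩ := hS
  obtain ⟨K, hK⟩ : ∃ K, K = 2 * R + 60 * T := ⟨_, rfl⟩
  obtain ⟨L, hL⟩ : ∃ L, L = 0 * R + 11 * T := ⟨_, rfl⟩
  have e1 : 9 * (3 * x + 6 * y) = 1 * R + 5 * K := by rw [h1, hK]; ring
  have e2 : 9 * y = 2 * R + 5 * L := by rw [h2, hL]; ring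
  clear h1 h2 hK hL
  omega

theorem mod5_b {x y R S : ℤ} (h : (5 : ℤ) ∣ x ∨ (5 : ℤ) ∣ y) (hS : (5 : ℤ) ∣ S)
    (h1 : 9 * (3 * x + 6 * y) = 241 * R + 1320 * S) (h2 : 9 * y = 44 * R + 241 * S) :
    (5 : ℤ) ∣ x ∧ (5 : ℤ) ∣ y := by
  obtain ⟨T, rfl⟩ := hS
  obtain ⟨K, hK⟩ : ∃ K, K = 48 * R + 1320 * T := ⟨_, rfl⟩
  obtain ⟨L, hL⟩ : ∃ L, L = 8 * R + 241 * T := ⟨_, rfl⟩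
  have e1 : 9 * (3 * x + 6 * y) = 1 * R + 5 * K := by rw [h1, hK]; ring
  have e2 : 9 * y = 4 * R + 5 * L := by rw [h2, hL]; ring
  clear h1 h2 hK hL
  omega

theorem mod5_c {x y R S : ℤ} (h : (5 : ℤ) ∣ x ∨ (5 : ℤ) ∣ y) (hS : (5 : ℤ) ∣ S)
    (h1 : 9 * (3 * x + 6 * y) = 116161 * R + 636240 * S) (h2 : 9 * y = 21208 * R + 116161 * S) :
    (5 : ℤ) ∣ x ∧ (5 : ℤ) ∣ y := by
  obtain ⟨T, rfl⟩ := hS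
  obtain ⟨K, hK⟩ : ∃ K, K = 23232 * R + 636240 * T := ⟨_, rfl⟩
  obtain ⟨L, hL⟩ : ∃ L, L = 4241 * R + 116161 * T := ⟨_, rfl⟩
  have e1 : 9 * (3 * x + 6 * y) = 1 * R + 5 * K := by rw [h1, hK]; ring
  have e2 : 9 * y = 3 * R + 5 * L := by rw [h2, hL]; ring
  clear h1 h2 hK hL
  omega

theorem final30 {x y z : ℤ} (hz : 0 < z) (hxy : IsCoprime x y) (hx2 : ¬ (2 : ℤ) ∣ x)
    (hy3 : ¬ (3 : ℤ) ∣ y) (hxz : IsCoprime x z) (hyz : IsCoprime y z)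
    (h5 : (5 : ℤ) ∣ x * y) (h : 3 * x ^ 4 + 12 * x ^ 2 * y ^ 2 + 2 * y ^ 4 = z ^ 5) : False := by
  obtain ⟨r, u, v, hr, hN, he⟩ := rep30 (X := 3 * x ^ 2 + 6 * y ^ 2) (Y := y ^ 2) hz
    (by rw [← h]; ring) hyz.pow_left
  rw [fifth30] at he
  have p5 : Prime (5 : ℤ) := by norm_num
  have hno : ¬ ((5 : ℤ) ∣ x ^ 2 ∧ (5 : ℤ) ∣ y ^ 2) := by
    rintro ⟨h1, h2⟩
    exact p5.not_isUnit (hxy.isUnit_of_dvd' (p5.dvd_of_dvd_pow h1) (p5.dvd_of_dvd_pow h2))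
  have h5' : (5 : ℤ) ∣ x ^ 2 ∨ (5 : ℤ) ∣ y ^ 2 := by
    rcases p5.dvd_or_dvd h5 with h1 | h1
    · exact Or.inl (dvd_pow h1 two_ne_zero)
    · exact Or.inr (dvd_pow h1 two_ne_zero)
  obtain ⟨R, hR⟩ : ∃ R, R = (3 * u) ^ 5 + 300 * (3 * u) ^ 3 * v ^ 2 + 4500 * (3 * u) * v ^ 4 :=
    ⟨_, rfl⟩
  obtain ⟨S, hS⟩ : ∃ S, S = 5 * (3 * u) ^ 4 * v + 300 * (3 * u) ^ 2 * v ^ 3 + 900 * v ^ 5 :=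
    ⟨_, rfl⟩
  have hS5 : (5 : ℤ) ∣ S := ⟨(3 * u) ^ 4 * v + 60 * (3 * u) ^ 2 * v ^ 3 + 180 * v ^ 5, by
    rw [hS]; ring⟩
  rw [← hR, ← hS] at he
  rcases eps30 r hr _ _ _ _ he with ⟨h1, h2⟩ | ⟨h1, h2⟩ | ⟨h1, h2⟩ | ⟨h1, h2⟩ |
    ⟨h1, h2⟩
  · refine caseA hy3 hyz hN ?_
    apply mul_left_cancel₀ (by norm_num : (9 : ℤ) ≠ 0)
    rw [h2, hS]; ring
  · exact hno (mod5_a h5' hS5 h1 h2)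
  · exact hno (mod5_b h5' hS5 h1 h2)
  · refine caseB (u := 3 * u + 5 * v) (v := u + 2 * v) hx2 hxz (by rw [← hN]; ring) ?_
    apply mul_left_cancel₀ (by norm_num : (27 : ℤ) ≠ 0)
    rw [hR, hS] at h1 h2
    linear_combination -h1 + 6 * h2
  · exact hno (mod5_c h5' hS5 h1 h2)

theorem stmt_14 :
    ¬ ∃ x y z : ℤ, Int.gcd x y = 1 ∧ (x - y) ^ 4 + x ^ 4 + (x + y) ^ 4 = z ^ 5 := by
  rintro ⟨x, y, z, hg, h⟩
  have hxy : IsCoprime x y := Int.isCoprime_iff_gcd_eq_one.mpr hg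
  have hF : 3 * x ^ 4 + 12 * x ^ 2 * y ^ 2 + 2 * y ^ 4 = z ^ 5 := by rw [← h]; ring
  have hz : 0 < z := by
    by_contra hcon
    have h1 : z ^ 5 ≤ 0 := by
      have : Odd 5 := by decide
      exact this.pow_nonpos_iff.mpr (by omega)
    have h2 : 0 ≤ 12 * x ^ 2 * y ^ 2 := by positivity
    have h3 : 0 ≤ x ^ 4 := by positivity
    have h4 : 0 ≤ y ^ 4 := by positivity
    have hx : x = 0 := pow_eq_zero_iff (n := 4) (by norm_num) |>.mp (by linarith)
    have hy : y = 0 := pow_eq_zero_iff (n := 4) (by norm_num) |>.mp (by linarith)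
    rw [hx, hy] at hg
    norm_num at hg
  -- a prime dividing two of the variables
  have hx2 : ¬ (2 : ℤ) ∣ x := by
    rintro ⟨k, rfl⟩
    obtain ⟨m, rfl⟩ : (2 : ℤ) ∣ z := Int.prime_two.dvd_of_dvd_pow (n := 5)
      ⟨24 * k ^ 4 + 24 * k ^ 2 * y ^ 2 + y ^ 4, by rw [← hF]; ring⟩
    have : (2 : ℤ) ∣ y := Int.prime_two.dvd_of_dvd_pow (n := 4)
      ⟨8 * m ^ 5 - 12 * k ^ 4 - 12 * k ^ 2 * y ^ 2, by
        apply mul_left_cancel₀ (by norm_num : (2 : ℤ) ≠ 0)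
        linear_combination hF⟩
    exact Int.prime_two.not_isUnit (hxy.isUnit_of_dvd' ⟨k, rfl⟩ this)
  have hy3 : ¬ (3 : ℤ) ∣ y := by
    rintro ⟨k, rfl⟩
    obtain ⟨m, rfl⟩ : (3 : ℤ) ∣ z := Int.prime_three.dvd_of_dvd_pow (n := 5)
      ⟨x ^ 4 + 36 * x ^ 2 * k ^ 2 + 54 * k ^ 4, by rw [← hF]; ring⟩
    have : (3 : ℤ) ∣ x := Int.prime_three.dvd_of_dvd_pow (n := 4)
      ⟨27 * m ^ 5 - 12 * x ^ 2 * k ^ 2 - 18 * k ^ 4, by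
        apply mul_left_cancel₀ (by norm_num : (3 : ℤ) ≠ 0)
        linear_combination hF⟩
    exact Int.prime_three.not_isUnit (hxy.isUnit_of_dvd' this ⟨k, rfl⟩)
  have hx2' : IsCoprime x 2 := (Int.prime_two.coprime_iff_not_dvd.mpr hx2).symm
  have hy3' : IsCoprime y 3 := (Int.prime_three.coprime_iff_not_dvd.mpr hy3).symm
  have hxz : IsCoprime x z := by
    have h1 : IsCoprime x (z ^ 5) := by
      have : z ^ 5 = 2 * y ^ 4 + x * (3 * x ^ 3 + 12 * x * y ^ 2) := by rw [← hF]; ring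
      rw [this]
      exact IsCoprime.add_mul_left_right (hx2'.mul_right hxy.pow_right) _
    exact (IsCoprime.pow_right_iff (by norm_num)).mp h1
  have hyz : IsCoprime y z := by
    have h1 : IsCoprime y (z ^ 5) := by
      have : z ^ 5 = 3 * x ^ 4 + y * (2 * y ^ 3 + 12 * x ^ 2 * y) := by rw [← hF]; ring
      rw [this]
      exact IsCoprime.add_mul_left_right (hy3'.mul_right hxy.symm.pow_right) _
    exact (IsCoprime.pow_right_iff (by norm_num)).mp h1
  have h2z : IsCoprime 2 z := by
    have h1 : IsCoprime (2 : ℤ) (z ^ 5) := by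
      have : z ^ 5 = (3 * x ^ 4) + 2 * (6 * x ^ 2 * y ^ 2 + y ^ 4) := by rw [← hF]; ring
      rw [this]
      exact IsCoprime.add_mul_left_right
        (IsCoprime.mul_right (by norm_num) hx2'.symm.pow_right) _
    exact (IsCoprime.pow_right_iff (by norm_num)).mp h1
  have h5 := five_dvd_xy hz (h2z.mul_left (hxz.mul_left hyz)) hF
  exact final30 hz hxy hx2 hy3 hxz hyz h5 hF
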